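/- In Ω¹(A_θ), the left A_θ-submodule generated by {d_θ b : b ∈ B}, the right A_θ-submodule generated by the same set, and the A_θ-sub-bimodule generated by it all coincide (this is the module Ω¹_hor(A_θ) of horizontal 1-forms of the deformed Hopf fibration). Moreover the B-submodule B d_θ B := span{b d_θ b' : b, b' ∈ B} ⊆ Ω¹(A_θ), with the differential b ↦ d_θ b, is isomorphic as a B-module with derivation to the module of Kähler differentials Ω¹_{B/ℂ} of B ≅ O(S²). -/

import Mathlib

/-!
The proof transports everything to the undeformed algebra. The twist
`a ⊗ a' ↦ e^{πiθ(m₁m₂' − m₂m₁')} a ⊗ a'` is an automorphism of the vector space `A ⊗ A` which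
carries the star multiplication to the ordinary one, and the braided product to the star product
of the `ℤ²`-graded algebra `A ⊗ A`. On homogeneous elements the latter differs from the ordinary
product by a phase only, and `I = ker μ` is spanned by homogeneous elements; hence the twist
carries `(Γ¹(A_θ))²` to `I²` (`mem_K2_iff`), and `(A ⊗ A) / (Γ¹(A_θ))²` is identified with
`(A ⊗ A) / I²`, which contains the Kähler differentials of `A`.

For homogeneous `a`, `a'`, `b` the element `a ⋆ d_θ b ⋆ a'` becomes a phase times `a a' db`
(`bimodule_generator`), because left and right multiplication agree on `I / I²`. Therefore the
left, the right and the two-sided span all become the span of the classical forms `a db`.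

On `B` all phases are `1`, so the remaining claim is that `Ω¹_B → Ω¹_A` is injective
(`kaehler_map_injective`). Let `P = (zᵢ* zⱼ)`, a projection matrix whose entries generate `B`.
The Grassmann connection `Dz = z dP`, `Dz* = dP z*` is a well-defined derivation of `A` with values
in `A ⊗_B Ω¹_B`, and `P² = P` gives `D P = dP`, so `D` extends `d` (`exists_connection`). Together
with the `B`-linear projection of `A` onto its summand `B` it provides a left inverse.
-/

set_option synthInstance.maxHeartbeats 1000000
set_option maxHeartbeats 1000000

open scoped TensorProduct
noncomputable section

/-- The total-degree-`n` component of a `ℤ²`-graded module. -/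
def totalDeg {A : Type} [AddCommMonoid A] [Module ℂ A]
    (𝒜 : ℤ × ℤ → Submodule ℂ A) (n : ℤ) : Submodule ℂ A :=
  ⨆ (p : ℤ × ℤ) (_ : p.1 + p.2 = n), 𝒜 p

/-- The phase factor `e^{πiθ(m₁m₂' − m₂m₁')}`. -/
def phase (θ : ℝ) (p q : ℤ × ℤ) : ℂ :=
  Complex.exp (Complex.I * ((Real.pi * θ : ℝ) : ℂ) * ((p.1 * q.2 - p.2 * q.1 : ℤ) : ℂ))

/-- The cotriangular structure phase `R_θ(t_u ⊗ t_w) = e^{−2πiθ(u₁w₂ − u₂w₁)}`. -/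
def rphase (θ : ℝ) (u w : ℤ × ℤ) : ℂ :=
  Complex.exp (-(Complex.I * ((2 * Real.pi * θ : ℝ) : ℂ) * ((u.1 * w.2 - u.2 * w.1 : ℤ) : ℂ)))

section Helpers

variable {A : Type} [CommRing A] [Algebra ℂ A] (𝒜 : ℤ × ℤ → Submodule ℂ A) [GradedAlgebra 𝒜]

/-! ### Maps out of graded modules -/

section Graded

variable {M : Type*} [AddCommGroup M] [Module ℂ M]

/-- The linear map out of a graded module given on the component of degree `p` by `f p`. -/
def gradedLift (f : ℤ × ℤ → A →ₗ[ℂ] M) : A →ₗ[ℂ] M :=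
  (DirectSum.toModule ℂ (ℤ × ℤ) M fun p => (f p).comp (𝒜 p).subtype).comp
    (DirectSum.decomposeLinearEquiv 𝒜).toLinearMap

lemma gradedLift_of_mem (f : ℤ × ℤ → A →ₗ[ℂ] M) {p : ℤ × ℤ} {a : A} (ha : a ∈ 𝒜 p) :
    gradedLift 𝒜 f a = f p a := by
  simp only [gradedLift, LinearMap.comp_apply, LinearEquiv.coe_coe,
    DirectSum.decomposeLinearEquiv_apply]
  rw [DirectSum.decompose_of_mem 𝒜 ha]
  erw [DirectSum.toModule_lof]
  rfl


lemma graded_induction {P : A → Prop} (h0 : P 0) (hom : ∀ p, ∀ a ∈ 𝒜 p, P a)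
    (add : ∀ a b, P a → P b → P (a + b)) (a : A) : P a :=
  DirectSum.Decomposition.inductionOn 𝒜 (motive := P) h0 (fun {p} m => hom p m m.2) add a

lemma tensor_hom_ext {f g : A ⊗[ℂ] A →ₗ[ℂ] M}
    (h : ∀ p q, ∀ a ∈ 𝒜 p, ∀ b ∈ 𝒜 q, f (a ⊗ₜ b) = g (a ⊗ₜ b)) : f = g := by
  refine TensorProduct.ext' fun a b => ?_
  induction a using graded_induction 𝒜 with
  | h0 => simp
  | add x y hx hy => simp only [TensorProduct.add_tmul, map_add, hx, hy]
  | hom p a ha =>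
    induction b using graded_induction 𝒜 with
    | h0 => simp
    | add x y hx hy => simp only [TensorProduct.tmul_add, map_add, hx, hy]
    | hom q b hb => exact h p q a ha b hb

end Graded

/-! ### The twist of `A ⊗ A` -/

lemma phase_ne_zero (θ : ℝ) (p q : ℤ × ℤ) : phase θ p q ≠ 0 := Complex.exp_ne_zero _

lemma phase_neg_mul (θ : ℝ) (p q : ℤ × ℤ) : phase (-θ) p q * phase θ p q = 1 := by
  rw [phase, phase, ← Complex.exp_add, ← Complex.exp_zero]
  congr 1; push_cast; ring

lemma phase_mul_neg (θ : ℝ) (p q : ℤ × ℤ) : phase θ p q * phase (-θ) p q = 1 := by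
  rw [mul_comm, phase_neg_mul]

@[simp] lemma phase_zero_left (θ : ℝ) (q : ℤ × ℤ) : phase θ 0 q = 1 := by simp [phase]

@[simp] lemma phase_zero_right (θ : ℝ) (q : ℤ × ℤ) : phase θ q 0 = 1 := by simp [phase]

lemma phase_eq_one (θ : ℝ) {p q : ℤ × ℤ} (hp : p.1 + p.2 = 0) (hq : q.1 + q.2 = 0) :
    phase θ p q = 1 := by
  have h : p.1 * q.2 - p.2 * q.1 = 0 := by
    rw [eq_neg_of_add_eq_zero_left hp, eq_neg_of_add_eq_zero_left hq]; ring
  simp [phase, h]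

/-- The twist `a ⊗ a' ↦ e^{πiθ(m₁m₂' − m₂m₁')} a ⊗ a'` of `A ⊗ A`. -/
def twist (θ : ℝ) : A ⊗[ℂ] A →ₗ[ℂ] A ⊗[ℂ] A :=
  TensorProduct.lift (gradedLift 𝒜 fun p =>
    (TensorProduct.mk ℂ A A).compl₂ (gradedLift 𝒜 fun q => phase θ p q • LinearMap.id))

lemma twist_tmul (θ : ℝ) {p q : ℤ × ℤ} {a b : A} (ha : a ∈ 𝒜 p) (hb : b ∈ 𝒜 q) :
    twist 𝒜 θ (a ⊗ₜ b) = phase θ p q • (a ⊗ₜ[ℂ] b) := by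
  simp [twist, gradedLift_of_mem 𝒜 _ ha, gradedLift_of_mem 𝒜 _ hb]

lemma twist_neg_twist (θ : ℝ) (x : A ⊗[ℂ] A) : twist 𝒜 (-θ) (twist 𝒜 θ x) = x := by
  have : (twist 𝒜 (-θ)).comp (twist 𝒜 θ) = LinearMap.id := by
    refine tensor_hom_ext 𝒜 fun p q a ha b hb => ?_
    simp [twist_tmul 𝒜 _ ha hb, smul_smul, phase_mul_neg]
  exact LinearMap.congr_fun this x

lemma twist_twist_neg (θ : ℝ) (x : A ⊗[ℂ] A) : twist 𝒜 θ (twist 𝒜 (-θ) x) = x := by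
  simpa using twist_neg_twist 𝒜 (-θ) x

/-- `dform a b = a ⊗ b - a b ⊗ 1`, the representative of `a db` in the kernel of the
undeformed multiplication. -/
def dform : A →ₗ[ℂ] A →ₗ[ℂ] A ⊗[ℂ] A :=
  TensorProduct.mk ℂ A A - (LinearMap.mul ℂ A).compr₂ ((TensorProduct.mk ℂ A A).flip 1)

lemma dform_apply (a b : A) : dform a b = a ⊗ₜ[ℂ] b - (a * b) ⊗ₜ[ℂ] (1 : A) := by
  simp [dform]

lemma dform_mem (a b : A) : dform a b ∈ KaehlerDifferential.ideal ℂ A := by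
  simp [dform_apply, KaehlerDifferential.ideal, RingHom.mem_ker]

/-- The classical ideal `ker μ` is spanned by the forms `a db` with `a`, `b` homogeneous. -/
lemma ideal_eq_span : (KaehlerDifferential.ideal ℂ A).restrictScalars ℂ =
    Submodule.span ℂ {x | ∃ p q : ℤ × ℤ, ∃ a ∈ 𝒜 p, ∃ b ∈ 𝒜 q, x = dform a b} := by
  apply le_antisymm
  · intro x hx
    -- `T = lift dform` is the identity on `ker μ`, and maps `A ⊗ A` into the span
    have hT : ∀ x : A ⊗[ℂ] A, TensorProduct.lift dform x =
        x - (Algebra.TensorProduct.lmul' ℂ (S := A) x) ⊗ₜ[ℂ] (1 : A) := by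
      intro x
      induction x with
      | zero => simp
      | tmul a b => simp [dform_apply]
      | add x y hx hy => rw [map_add, hx, hy, map_add, TensorProduct.add_tmul]; abel
    have hx0 : Algebra.TensorProduct.lmul' ℂ (S := A) x = 0 := hx
    have h1 := hT x
    rw [hx0, TensorProduct.zero_tmul, sub_zero] at h1
    rw [← h1]
    generalize x = y
    induction y with
    | zero => simp
    | add x y hx hy => rw [map_add]; exact add_mem hx hy
    | tmul a b =>
      rw [TensorProduct.lift.tmul]
      induction a using graded_induction 𝒜 with
      | h0 => simp
      | add x y hx hy => rw [map_add, LinearMap.add_apply]; exact add_mem hx hy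
      | hom p a ha =>
        induction b using graded_induction 𝒜 with
        | h0 => simp
        | add x y hx hy => rw [map_add]; exact add_mem hx hy
        | hom q b hb => exact Submodule.subset_span ⟨p, q, a, ha, b, hb, rfl⟩
  · rw [Submodule.span_le]
    rintro _ ⟨p, q, a, -, b, -, rfl⟩
    exact dform_mem a b

/-! ### The square of the deformed ideal -/

section Deformed

variable {𝒜} {θ : ℝ} {stp : A →ₗ[ℂ] A →ₗ[ℂ] A}
    (hstp : ∀ (p q : ℤ × ℤ), ∀ a ∈ 𝒜 p, ∀ a' ∈ 𝒜 q, stp a a' = phase θ p q • (a * a'))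
    {bmul : A ⊗[ℂ] A →ₗ[ℂ] A ⊗[ℂ] A →ₗ[ℂ] A ⊗[ℂ] A}
    (hbmul : ∀ (p p' u u' : ℤ × ℤ), ∀ a ∈ 𝒜 p, ∀ a' ∈ 𝒜 p', ∀ c ∈ 𝒜 u, ∀ c' ∈ 𝒜 u',
      bmul (a ⊗ₜ[ℂ] a') (c ⊗ₜ[ℂ] c')
        = rphase θ u p' • ((stp a c) ⊗ₜ[ℂ] (stp a' c')))

include hstp

lemma stp_one (a : A) : stp a 1 = a := by
  induction a using graded_induction 𝒜 with
  | h0 => simp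
  | add x y hx hy => simp [hx, hy]
  | hom p a ha => simp [hstp p 0 a ha 1 SetLike.GradedOne.one_mem]

lemma one_stp (a : A) : stp 1 a = a := by
  induction a using graded_induction 𝒜 with
  | h0 => simp
  | add x y hx hy => simp [hx, hy]
  | hom p a ha => simp [hstp 0 p 1 SetLike.GradedOne.one_mem a ha]

/-- The twist intertwines the star multiplication with the undeformed one. -/
lemma lift_stp (x : A ⊗[ℂ] A) :
    TensorProduct.lift stp x = Algebra.TensorProduct.lmul' ℂ (S := A) (twist 𝒜 θ x) := by
  have : TensorProduct.lift stp =
      (Algebra.TensorProduct.lmul' ℂ (S := A)).toLinearMap.comp (twist 𝒜 θ) := by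
    refine tensor_hom_ext 𝒜 fun p q a ha b hb => ?_
    simp [twist_tmul 𝒜 _ ha hb, hstp p q a ha b hb]
  exact LinearMap.congr_fun this x

include hbmul

/-- The twist carries the braided product to the star product of the algebra `A ⊗ A`, graded by
the sum of the degrees of the two factors. -/
lemma twist_bmul_tmul {p q u v : ℤ × ℤ} {a b c d : A} (ha : a ∈ 𝒜 p) (hb : b ∈ 𝒜 q)
    (hc : c ∈ 𝒜 u) (hd : d ∈ 𝒜 v) :
    twist 𝒜 θ (bmul (twist 𝒜 (-θ) (a ⊗ₜ b)) (twist 𝒜 (-θ) (c ⊗ₜ d))) =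
      phase θ (p + q) (u + v) • ((a ⊗ₜ[ℂ] b) * (c ⊗ₜ[ℂ] d)) := by
  rw [twist_tmul 𝒜 _ ha hb, twist_tmul 𝒜 _ hc hd]
  simp only [map_smul, LinearMap.smul_apply]
  rw [hbmul p q u v a ha b hb c hc d hd, hstp p u a ha c hc, hstp q v b hb d hd,
    TensorProduct.smul_tmul_smul, map_smul, map_smul,
    twist_tmul 𝒜 _ (SetLike.GradedMul.mul_mem ha hc) (SetLike.GradedMul.mul_mem hb hd),
    Algebra.TensorProduct.tmul_mul_tmul]
  simp only [smul_smul]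
  congr 1
  simp only [phase, rphase, ← Complex.exp_add]
  congr 1
  simp only [Prod.fst_add, Prod.snd_add]
  push_cast
  ring

lemma twist_bmul_dform {p q u v : ℤ × ℤ} {a b c d : A} (ha : a ∈ 𝒜 p) (hb : b ∈ 𝒜 q)
    (hc : c ∈ 𝒜 u) (hd : d ∈ 𝒜 v) :
    twist 𝒜 θ (bmul (twist 𝒜 (-θ) (dform a b)) (twist 𝒜 (-θ) (dform c d))) =
      phase θ (p + q) (u + v) • (dform a b * dform c d) := by
  have h1 : (1 : A) ∈ 𝒜 0 := SetLike.GradedOne.one_mem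
  have hab := SetLike.GradedMul.mul_mem ha hb
  have hcd := SetLike.GradedMul.mul_mem hc hd
  simp only [dform_apply, map_sub, LinearMap.sub_apply]
  rw [twist_bmul_tmul hstp hbmul ha hb hc hd, twist_bmul_tmul hstp hbmul hab h1 hc hd,
    twist_bmul_tmul hstp hbmul ha hb hcd h1, twist_bmul_tmul hstp hbmul hab h1 hcd h1]
  simp only [add_zero, ← smul_sub]
  congr 1
  ring

/-- The twist identifies `(Γ¹(A_θ))²` with the square of the classical ideal `ker μ`. -/
lemma mem_K2_iff {Kθ K2θ : Submodule ℂ (A ⊗[ℂ] A)}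
    (hK : Kθ = LinearMap.ker (TensorProduct.lift stp))
    (hK2 : K2θ = Submodule.span ℂ {y : A ⊗[ℂ] A | ∃ x ∈ Kθ, ∃ x' ∈ Kθ, y = bmul x x'})
    (x : A ⊗[ℂ] A) : x ∈ K2θ ↔ twist 𝒜 θ x ∈ KaehlerDifferential.ideal ℂ A ^ 2 := by
  have hKmem : ∀ x, x ∈ Kθ ↔
      twist 𝒜 θ x ∈ (KaehlerDifferential.ideal ℂ A).restrictScalars ℂ := by
    intro x
    rw [hK, LinearMap.mem_ker, lift_stp hstp]
    rfl
  constructor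
  · intro hx
    suffices K2θ ≤ ((KaehlerDifferential.ideal ℂ A ^ 2).restrictScalars ℂ).comap (twist 𝒜 θ)
      from this hx
    rw [hK2, Submodule.span_le]
    rintro _ ⟨x, hx, y, hy, rfl⟩
    rw [hKmem, ideal_eq_span 𝒜] at hx hy
    rw [← twist_neg_twist 𝒜 θ x, ← twist_neg_twist 𝒜 θ y]
    generalize twist 𝒜 θ x = x at hx
    generalize twist 𝒜 θ y = y at hy
    simp only [Submodule.comap_coe, Set.mem_preimage, SetLike.mem_coe]
    induction hx, hy using Submodule.span_induction₂ with
    | mem_mem x y hx hy =>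
      obtain ⟨p, q, a, ha, b, hb, rfl⟩ := hx
      obtain ⟨u, v, c, hc, d, hd, rfl⟩ := hy
      rw [twist_bmul_dform hstp hbmul ha hb hc hd]
      apply Submodule.smul_mem
      rw [Submodule.restrictScalars_mem, pow_two]
      exact Ideal.mul_mem_mul (dform_mem a b) (dform_mem c d)
    | zero_left y hy => simp
    | zero_right x hx => simp
    | add_left x y z _ _ _ h1 h2 => simpa using add_mem h1 h2
    | add_right x y z _ _ _ h1 h2 => simpa using add_mem h1 h2
    | smul_left r x y _ _ h =>
      simpa only [map_smul, LinearMap.smul_apply] using Submodule.smul_mem _ r h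
    | smul_right r x y _ _ h =>
      simpa only [map_smul, LinearMap.smul_apply] using Submodule.smul_mem _ r h
  · intro hx
    rw [← twist_neg_twist 𝒜 θ x]
    generalize twist 𝒜 θ x = x at hx
    rw [pow_two] at hx
    refine Submodule.mul_induction_on hx (fun x hx y hy => ?_) (fun x y hx hy => ?_)
    · replace hx : x ∈ (KaehlerDifferential.ideal ℂ A).restrictScalars ℂ := hx
      replace hy : y ∈ (KaehlerDifferential.ideal ℂ A).restrictScalars ℂ := hy
      rw [ideal_eq_span 𝒜] at hx hy
      induction hx, hy using Submodule.span_induction₂ with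
      | mem_mem x y hx hy =>
        obtain ⟨p, q, a, ha, b, hb, rfl⟩ := hx
        obtain ⟨u, v, c, hc, d, hd, rfl⟩ := hy
        have h := twist_bmul_dform hstp hbmul ha hb hc hd
        rw [← inv_smul_eq_iff₀ (phase_ne_zero _ _ _)] at h
        rw [← h, map_smul, twist_neg_twist, hK2]
        refine Submodule.smul_mem _ _ (Submodule.subset_span ⟨_, ?_, _, ?_, rfl⟩)
        · rw [hKmem, twist_twist_neg]; exact dform_mem a b
        · rw [hKmem, twist_twist_neg]; exact dform_mem c d
      | zero_left y hy => simp
      | zero_right x hx => simp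
      | add_left x y z _ _ _ h1 h2 => simpa only [add_mul, map_add] using add_mem h1 h2
      | add_right x y z _ _ _ h1 h2 => simpa only [mul_add, map_add] using add_mem h1 h2
      | smul_left r x y _ _ h =>
        simpa only [smul_mul_assoc, map_smul] using Submodule.smul_mem _ r h
      | smul_right r x y _ _ h =>
        simpa only [mul_smul_comm, map_smul] using Submodule.smul_mem _ r h
    · rw [map_add]; exact add_mem hx hy

end Deformed

/-! ### Horizontal forms -/

section Quotient

variable {𝒜} {θ : ℝ} {stp : A →ₗ[ℂ] A →ₗ[ℂ] A}
    (hstp : ∀ (p q : ℤ × ℤ), ∀ a ∈ 𝒜 p, ∀ a' ∈ 𝒜 q, stp a a' = phase θ p q • (a * a'))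
    {K2θ : Submodule ℂ (A ⊗[ℂ] A)}
    (hK2 : ∀ x : A ⊗[ℂ] A, x ∈ K2θ ↔ twist 𝒜 θ x ∈ KaehlerDifferential.ideal ℂ A ^ 2)

include hstp hK2

/-- Up to a phase, the two-sided multiple `a ⋆ d_θ b ⋆ a'` of homogeneous elements corresponds
under the twist to the classical form `a a' db`: classically, the left and right multiplications
by `a'` agree on `ker μ` modulo its square. -/
lemma bimodule_generator {p q r : ℤ × ℤ} {a b a' : A} (ha : a ∈ 𝒜 p) (hb : b ∈ 𝒜 q)
    (ha' : a' ∈ 𝒜 r) :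
    K2θ.mkQ (TensorProduct.map (stp a) (stp.flip a')
        ((1 : A) ⊗ₜ[ℂ] b - b ⊗ₜ[ℂ] (1 : A))) =
      (phase θ p (q + r) * phase θ q r) •
        K2θ.mkQ (twist 𝒜 (-θ) (dform (a * a') b)) := by
  rw [← map_smul, ← sub_eq_zero, ← map_sub, Submodule.mkQ_apply, Submodule.Quotient.mk_eq_zero,
    hK2, map_sub, map_smul, twist_twist_neg, map_sub, TensorProduct.map_tmul,
    TensorProduct.map_tmul, LinearMap.flip_apply, LinearMap.flip_apply, stp_one hstp,
    one_stp hstp, hstp q r b hb a' ha', hstp p q a ha b hb, TensorProduct.tmul_smul,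
    ← TensorProduct.smul_tmul', map_sub, map_smul, map_smul,
    twist_tmul 𝒜 _ ha (SetLike.GradedMul.mul_mem hb ha'),
    twist_tmul 𝒜 _ (SetLike.GradedMul.mul_mem ha hb) ha', smul_smul, smul_smul]
  have hphase : phase θ p q * phase θ (p + q) r = phase θ p (q + r) * phase θ q r := by
    simp only [phase, ← Complex.exp_add]
    congr 1
    simp only [Prod.fst_add, Prod.snd_add]
    push_cast
    ring
  rw [hphase, mul_comm (phase θ q r), ← smul_sub, ← smul_sub]
  have key : a ⊗ₜ[ℂ] (b * a') - (a * b) ⊗ₜ[ℂ] a' - dform (a * a') b =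
      (a ⊗ₜ[ℂ] (1 : A)) * (dform 1 a' * dform 1 b) := by
    simp only [dform_apply, mul_sub, sub_mul, Algebra.TensorProduct.tmul_mul_tmul, one_mul,
      mul_one, mul_comm a' b, mul_assoc]
    abel
  rw [key, pow_two]
  exact Submodule.smul_of_tower_mem _ _
    (Ideal.mul_mem_left _ _ (Ideal.mul_mem_mul (dform_mem _ _) (dform_mem _ _)))

lemma left_generator {p q : ℤ × ℤ} {a b : A} (ha : a ∈ 𝒜 p) (hb : b ∈ 𝒜 q) :
    K2θ.mkQ (TensorProduct.map (stp a) LinearMap.id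
        ((1 : A) ⊗ₜ[ℂ] b - b ⊗ₜ[ℂ] (1 : A))) =
      phase θ p q • K2θ.mkQ (twist 𝒜 (-θ) (dform a b)) := by
  have h := bimodule_generator hstp hK2 ha hb (SetLike.GradedOne.one_mem (A := 𝒜))
  have h1 : stp.flip 1 = LinearMap.id := LinearMap.ext fun x => stp_one hstp x
  simpa [h1] using h

lemma right_generator {q r : ℤ × ℤ} {a' b : A} (hb : b ∈ 𝒜 q) (ha' : a' ∈ 𝒜 r) :
    K2θ.mkQ (TensorProduct.map LinearMap.id (stp.flip a')
        ((1 : A) ⊗ₜ[ℂ] b - b ⊗ₜ[ℂ] (1 : A))) =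
      phase θ q r • K2θ.mkQ (twist 𝒜 (-θ) (dform a' b)) := by
  have h := bimodule_generator hstp hK2 (SetLike.GradedOne.one_mem (A := 𝒜)) hb ha'
  have h1 : stp 1 = LinearMap.id := LinearMap.ext fun x => one_stp hstp x
  simpa [h1] using h

omit hstp hK2 [GradedAlgebra 𝒜] in
/-- A property of elements of total degree `0` may be checked on homogeneous ones. -/
lemma totalDeg_induction {P : A → Prop} (h0 : P 0)
    (hom : ∀ p : ℤ × ℤ, p.1 + p.2 = 0 → ∀ a ∈ 𝒜 p, P a)
    (add : ∀ a b, P a → P b → P (a + b)) {b : A} (hb : b ∈ totalDeg 𝒜 0) : P b := by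
  refine Submodule.iSup_induction _ (motive := P) hb (fun p x hx => ?_) h0 add
  by_cases hp : p.1 + p.2 = 0
  · simp only [hp, iSup_pos] at hx
    exact hom p hp x hx
  · simp only [hp, not_false_eq_true, iSup_neg, Submodule.mem_bot] at hx
    exact hx ▸ h0

omit hstp hK2 in
lemma classical_le {S : Submodule ℂ ((A ⊗[ℂ] A) ⧸ K2θ)}
    (h : ∀ p q, ∀ a ∈ 𝒜 p, ∀ b ∈ 𝒜 q, q.1 + q.2 = 0 →
      K2θ.mkQ (twist 𝒜 (-θ) (dform a b)) ∈ S) :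
    Submodule.span ℂ {y : (A ⊗[ℂ] A) ⧸ K2θ | ∃ (a : A), ∃ b ∈ totalDeg 𝒜 0,
      y = K2θ.mkQ (twist 𝒜 (-θ) (dform a b))} ≤ S := by
  rw [Submodule.span_le]
  rintro _ ⟨a, b, hb, rfl⟩
  rw [SetLike.mem_coe]
  induction a using graded_induction 𝒜 with
  | h0 => simp
  | add x y hx hy => simpa using add_mem hx hy
  | hom p a ha =>
    refine totalDeg_induction (P := fun b => K2θ.mkQ (twist 𝒜 (-θ) (dform a b)) ∈ S) (by simp)
      (fun q hq b hb => h p q a ha b hb hq) (fun x y hx hy => ?_) hb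
    simpa using add_mem hx hy

/-- The deformed horizontal forms are carried into the classical ones by the twist. -/
lemma bimodule_le_classical :
    Submodule.span ℂ {y : (A ⊗[ℂ] A) ⧸ K2θ | ∃ (a a' : A), ∃ b ∈ totalDeg 𝒜 0,
          y = K2θ.mkQ (TensorProduct.map (stp a) (stp.flip a')
            ((1 : A) ⊗ₜ[ℂ] b - b ⊗ₜ[ℂ] (1 : A)))} ≤
    Submodule.span ℂ {y : (A ⊗[ℂ] A) ⧸ K2θ | ∃ (a : A), ∃ b ∈ totalDeg 𝒜 0,
      y = K2θ.mkQ (twist 𝒜 (-θ) (dform a b))} := by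
  rw [Submodule.span_le]
  rintro _ ⟨a, a', b, hb, rfl⟩
  rw [SetLike.mem_coe]
  set S := Submodule.span ℂ {y : (A ⊗[ℂ] A) ⧸ K2θ | ∃ (a : A), ∃ b ∈ totalDeg 𝒜 0,
      y = K2θ.mkQ (twist 𝒜 (-θ) (dform a b))} with hS
  induction a using graded_induction 𝒜 with
  | h0 => simp
  | add x y hx hy =>
    simpa only [map_add, TensorProduct.map_add_left, LinearMap.add_apply] using add_mem hx hy
  | hom p a ha =>
    induction a' using graded_induction 𝒜 with
    | h0 => simp
    | add x y hx hy =>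
      simpa only [map_add, TensorProduct.map_add_right, LinearMap.add_apply] using add_mem hx hy
    | hom r a' ha' =>
      refine totalDeg_induction (P := fun b => K2θ.mkQ (TensorProduct.map (stp a) (stp.flip a')
        ((1 : A) ⊗ₜ[ℂ] b - b ⊗ₜ[ℂ] (1 : A))) ∈ S) (by simp)
        (fun q hq b hb => ?_) (fun x y hx hy => ?_) hb
      · rw [bimodule_generator hstp hK2 ha hb ha']
        refine S.smul_mem _ (Submodule.subset_span ⟨_, b, ?_, rfl⟩)
        exact Submodule.mem_iSup_of_mem q (Submodule.mem_iSup_of_mem hq hb)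
      · have h := add_mem hx hy
        rwa [← map_add, ← map_add, sub_add_sub_comm, ← TensorProduct.tmul_add,
          ← TensorProduct.add_tmul] at h

lemma left_eq_classical :
    Submodule.span ℂ {y : (A ⊗[ℂ] A) ⧸ K2θ | ∃ (a : A), ∃ b ∈ totalDeg 𝒜 0,
          y = K2θ.mkQ (TensorProduct.map (stp a) LinearMap.id
            ((1 : A) ⊗ₜ[ℂ] b - b ⊗ₜ[ℂ] (1 : A)))} =
    Submodule.span ℂ {y : (A ⊗[ℂ] A) ⧸ K2θ | ∃ (a : A), ∃ b ∈ totalDeg 𝒜 0,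
      y = K2θ.mkQ (twist 𝒜 (-θ) (dform a b))} := by
  apply le_antisymm
  · refine le_trans (Submodule.span_mono ?_) (bimodule_le_classical hstp hK2)
    rintro _ ⟨a, b, hb, rfl⟩
    refine ⟨a, 1, b, hb, ?_⟩
    rw [show stp.flip 1 = LinearMap.id from LinearMap.ext fun x => stp_one hstp x]
  · refine classical_le fun p q a ha b hb hq => ?_
    have h := left_generator hstp hK2 ha hb
    rw [← inv_smul_eq_iff₀ (phase_ne_zero _ _ _)] at h
    rw [← h]
    refine Submodule.smul_mem _ _ (Submodule.subset_span ⟨a, b, ?_, rfl⟩)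
    exact Submodule.mem_iSup_of_mem q (Submodule.mem_iSup_of_mem hq hb)

lemma right_eq_classical :
    Submodule.span ℂ {y : (A ⊗[ℂ] A) ⧸ K2θ | ∃ (a : A), ∃ b ∈ totalDeg 𝒜 0,
          y = K2θ.mkQ (TensorProduct.map LinearMap.id (stp.flip a)
            ((1 : A) ⊗ₜ[ℂ] b - b ⊗ₜ[ℂ] (1 : A)))} =
    Submodule.span ℂ {y : (A ⊗[ℂ] A) ⧸ K2θ | ∃ (a : A), ∃ b ∈ totalDeg 𝒜 0,
      y = K2θ.mkQ (twist 𝒜 (-θ) (dform a b))} := by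
  apply le_antisymm
  · refine le_trans (Submodule.span_mono ?_) (bimodule_le_classical hstp hK2)
    rintro _ ⟨a, b, hb, rfl⟩
    refine ⟨1, a, b, hb, ?_⟩
    rw [show stp 1 = LinearMap.id from LinearMap.ext fun x => one_stp hstp x]
  · refine classical_le fun p q a ha b hb hq => ?_
    have h := right_generator hstp hK2 hb ha
    rw [← inv_smul_eq_iff₀ (phase_ne_zero _ _ _)] at h
    rw [← h]
    refine Submodule.smul_mem _ _ (Submodule.subset_span ⟨a, b, ?_, rfl⟩)
    exact Submodule.mem_iSup_of_mem q (Submodule.mem_iSup_of_mem hq hb)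

lemma bimodule_eq_classical :
    Submodule.span ℂ {y : (A ⊗[ℂ] A) ⧸ K2θ | ∃ (a a' : A), ∃ b ∈ totalDeg 𝒜 0,
          y = K2θ.mkQ (TensorProduct.map (stp a) (stp.flip a')
            ((1 : A) ⊗ₜ[ℂ] b - b ⊗ₜ[ℂ] (1 : A)))} =
    Submodule.span ℂ {y : (A ⊗[ℂ] A) ⧸ K2θ | ∃ (a : A), ∃ b ∈ totalDeg 𝒜 0,
      y = K2θ.mkQ (twist 𝒜 (-θ) (dform a b))} := by
  apply le_antisymm (bimodule_le_classical hstp hK2)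
  rw [← left_eq_classical hstp hK2]
  refine Submodule.span_mono ?_
  rintro _ ⟨a, b, hb, rfl⟩
  refine ⟨a, 1, b, hb, ?_⟩
  rw [show stp.flip 1 = LinearMap.id from LinearMap.ext fun x => stp_one hstp x]

omit hstp in
/-- The twist embeds the classical Kähler differentials of `A` into `(A ⊗ A) / (Γ¹(A_θ))²`. -/
lemma exists_kaehler_embedding :
    ∃ ψ : KaehlerDifferential ℂ A →ₗ[ℂ] ((A ⊗[ℂ] A) ⧸ K2θ), Function.Injective ψ ∧
      ∀ a b : A, ψ (a • KaehlerDifferential.D ℂ A b) =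
        K2θ.mkQ (twist 𝒜 (-θ) (dform a b)) := by
  let I := KaehlerDifferential.ideal ℂ A
  let ψ₁ : KaehlerDifferential ℂ A →ₗ[ℂ] ((A ⊗[ℂ] A) ⧸ I ^ 2) :=
    I.cotangentToQuotientSquare.restrictScalars ℂ
  have hle : (I ^ 2).restrictScalars ℂ ≤ K2θ.comap (twist 𝒜 (-θ)) := by
    intro x hx
    rw [Submodule.mem_comap, hK2, twist_twist_neg]
    exact hx
  let ψ₂ : ((A ⊗[ℂ] A) ⧸ I ^ 2) →ₗ[ℂ] ((A ⊗[ℂ] A) ⧸ K2θ) :=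
    (Submodule.mapQ _ _ (twist 𝒜 (-θ)) hle).comp
      (Submodule.Quotient.restrictScalarsEquiv ℂ (I ^ 2)).symm.toLinearMap
  have hψ₂ : ∀ x, ψ₂ ((I ^ 2).mkQ x) = K2θ.mkQ (twist 𝒜 (-θ) x) := fun x => rfl
  have hψ₁inj : Function.Injective ψ₁ := I.cotangentToQuotientSquare_injective
  have hψ₂inj : Function.Injective ψ₂ := by
    rw [injective_iff_map_eq_zero]
    intro x hx
    obtain ⟨x, rfl⟩ := (I ^ 2).mkQ_surjective x
    rw [hψ₂, Submodule.mkQ_apply, Submodule.Quotient.mk_eq_zero, hK2, twist_twist_neg] at hx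
    rwa [Submodule.mkQ_apply, Submodule.Quotient.mk_eq_zero]
  refine ⟨ψ₂.comp ψ₁, hψ₂inj.comp hψ₁inj, fun a b => ?_⟩
  · rw [← hψ₂, LinearMap.comp_apply]
    congr 1
    have h : (a • KaehlerDifferential.D ℂ A b : KaehlerDifferential ℂ A) =
        I.toCotangent ⟨dform a b, dform_mem a b⟩ := by
      have e : (⟨dform a b, dform_mem a b⟩ : I) =
          (a ⊗ₜ[ℂ] (1 : A)) • ⟨1 ⊗ₜ b - b ⊗ₜ 1,
            KaehlerDifferential.one_smul_sub_smul_one_mem_ideal ℂ b⟩ := by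
        ext
        simp [dform_apply, mul_sub]
      rw [e, map_smul, ← algebraMap_smul (A ⊗[ℂ] A) a (KaehlerDifferential.D ℂ A b)]
      rfl
    rw [h]
    rfl

end Quotient

/-! ### Differentials of the base -/

section Classical

variable {Bsub : Subalgebra ℂ A} (hBsub : Bsub.toSubmodule = totalDeg 𝒜 0)

lemma mem_Bsub_of_mem {𝒜 : ℤ × ℤ → Submodule ℂ A} (hBsub : Bsub.toSubmodule = totalDeg 𝒜 0)
    {p : ℤ × ℤ} (hp : p.1 + p.2 = 0) {a : A} (ha : a ∈ 𝒜 p) : a ∈ Bsub := by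
  rw [← Subalgebra.mem_toSubmodule, hBsub]
  exact Submodule.mem_iSup_of_mem p (Submodule.mem_iSup_of_mem hp ha)

/-- The projection of `A` onto its part of total degree `0`. -/
def proj : A →ₗ[ℂ] A :=
  gradedLift 𝒜 fun p => if p.1 + p.2 = 0 then LinearMap.id else 0

lemma proj_of_mem {p : ℤ × ℤ} {a : A} (ha : a ∈ 𝒜 p) :
    proj 𝒜 a = if p.1 + p.2 = 0 then a else 0 := by
  rw [proj, gradedLift_of_mem 𝒜 _ ha]
  split_ifs <;> simp

variable {𝒜}
include hBsub

omit [GradedAlgebra 𝒜] in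
lemma mem_totalDeg (b : Bsub) : (b : A) ∈ totalDeg 𝒜 0 := by
  rw [← hBsub]; exact b.2

lemma proj_mem (a : A) : proj 𝒜 a ∈ Bsub := by
  induction a using graded_induction 𝒜 with
  | h0 => simp
  | add x y hx hy => rw [map_add]; exact add_mem hx hy
  | hom p a ha =>
    rw [proj_of_mem 𝒜 ha]
    split_ifs with hp
    · exact mem_Bsub_of_mem hBsub hp ha
    · exact zero_mem _

lemma proj_mul (b : Bsub) (a : A) : proj 𝒜 (b * a) = b * proj 𝒜 a := by
  refine totalDeg_induction (P := fun b => proj 𝒜 (b * a) = b * proj 𝒜 a) (by simp)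
    (fun p hp b hb => ?_) (fun x y hx hy => by simp only [add_mul, map_add, hx, hy])
    (mem_totalDeg hBsub b)
  induction a using graded_induction 𝒜 with
  | h0 => simp
  | add x y hx hy => simp only [mul_add, map_add, hx, hy]
  | hom q a ha =>
    rw [proj_of_mem 𝒜 ha, proj_of_mem 𝒜 (SetLike.GradedMul.mul_mem hb ha)]
    have : (p + q).1 + (p + q).2 = q.1 + q.2 := by
      simp only [Prod.fst_add, Prod.snd_add]; omega
    rw [this]
    split_ifs <;> simp

lemma proj_coe (b : Bsub) : proj 𝒜 (b : A) = b := by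
  refine totalDeg_induction (P := fun b => proj 𝒜 b = b) (by simp)
    (fun p hp b hb => ?_) (fun x y hx hy => by simp only [map_add, hx, hy])
    (mem_totalDeg hBsub b)
  rw [proj_of_mem 𝒜 hb, if_pos hp]

/-- `B` is a direct summand of the `B`-module `A`. -/
lemma exists_retraction : ∃ π : A →ₗ[Bsub] Bsub, π 1 = 1 := by
  refine ⟨{ toFun := fun a => ⟨proj 𝒜 a, proj_mem hBsub a⟩
            map_add' := fun x y => Subtype.ext (map_add _ _ _)
            map_smul' := fun b a => Subtype.ext ?_ }, Subtype.ext ?_⟩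
  · exact proj_mul hBsub b a
  · simpa using proj_coe hBsub (1 : Bsub)

omit [GradedAlgebra 𝒜] in
/-- All phases between degrees of total degree `0` are `1`, so the star product of `B` is the
undeformed one. -/
lemma star_Bsub {θ : ℝ} {stp : A →ₗ[ℂ] A →ₗ[ℂ] A}
    (hstp : ∀ (p q : ℤ × ℤ), ∀ a ∈ 𝒜 p, ∀ a' ∈ 𝒜 q, stp a a' = phase θ p q • (a * a'))
    (b b' : Bsub) : stp b b' = b * b' := by
  refine totalDeg_induction (P := fun b => stp b b' = b * b') (by simp)
    (fun p hp b hb => ?_) (fun x y hx hy => by simp [add_mul, hx, hy]) (mem_totalDeg hBsub b)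
  refine totalDeg_induction (P := fun b' => stp b b' = b * b') (by simp)
    (fun q hq b' hb' => ?_) (fun x y hx hy => by simp [mul_add, hx, hy]) (mem_totalDeg hBsub b')
  rw [hstp p q b hb b' hb', phase_eq_one θ hp hq, one_smul]

lemma twist_Bsub (θ : ℝ) (b b' : Bsub) :
    twist 𝒜 θ ((b : A) ⊗ₜ[ℂ] (b' : A)) = (b : A) ⊗ₜ[ℂ] (b' : A) := by
  refine totalDeg_induction
    (P := fun b => twist 𝒜 θ ((b : A) ⊗ₜ[ℂ] (b' : A)) = (b : A) ⊗ₜ[ℂ] (b' : A)) (by simp)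
    (fun p hp b hb => ?_) (fun x y hx hy => by simp only [TensorProduct.add_tmul, map_add, hx, hy])
    (mem_totalDeg hBsub b)
  refine totalDeg_induction
    (P := fun b' => twist 𝒜 θ ((b : A) ⊗ₜ[ℂ] (b' : A)) = (b : A) ⊗ₜ[ℂ] (b' : A)) (by simp)
    (fun q hq b' hb' => ?_)
    (fun x y hx hy => by simp only [TensorProduct.tmul_add, map_add, hx, hy])
    (mem_totalDeg hBsub b')
  rw [twist_tmul 𝒜 θ hb hb', phase_eq_one θ hp hq, one_smul]

lemma twist_dform_Bsub (θ : ℝ) (b b' : Bsub) :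
    twist 𝒜 θ (dform (b : A) (b' : A)) = dform (b : A) (b' : A) := by
  have h1 := twist_Bsub hBsub θ b b'
  have h2 := twist_Bsub hBsub θ (b * b') 1
  rw [dform_apply, map_sub, h1]
  congr 1

omit hBsub

variable {z1 z2 z1s z2s : A}
    (hz1 : z1 ∈ 𝒜 (1, 0)) (hz2 : z2 ∈ 𝒜 (0, 1))
    (hz1s : z1s ∈ 𝒜 (-1, 0)) (hz2s : z2s ∈ 𝒜 (0, -1))
    (hrel : z1s * z1 + z2s * z2 = 1)
    (huniv : ∀ (C : Type) [CommRing C] [Algebra ℂ C] (w1 w2 w1s w2s : C),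
      w1s * w1 + w2s * w2 = 1 →
      ∃! f : A →ₐ[ℂ] C, f z1 = w1 ∧ f z2 = w2 ∧ f z1s = w1s ∧ f z2s = w2s)

omit [GradedAlgebra 𝒜] in
include hrel huniv in
/-- By the universal property, `A` is spanned by the monomials in its generators. -/
lemma span_monomials : (⊤ : Submodule ℂ A) = Submodule.span ℂ
    {x | ∃ k l m n : ℕ, x = z1 ^ k * z2 ^ l * (z1s ^ m * z2s ^ n)} := by
  set S : Submodule ℂ A := Submodule.span ℂ
    {x | ∃ k l m n : ℕ, x = z1 ^ k * z2 ^ l * (z1s ^ m * z2s ^ n)} with hS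
  have hmem : ∀ k l m n : ℕ, z1 ^ k * z2 ^ l * (z1s ^ m * z2s ^ n) ∈ S := fun k l m n =>
    Submodule.subset_span ⟨k, l, m, n, rfl⟩
  let T : Subalgebra ℂ A := S.toSubalgebra (by simpa using hmem 0 0 0 0) (by
    intro x y hx hy
    induction hx, hy using Submodule.span_induction₂ with
    | mem_mem x y hx hy =>
      obtain ⟨k, l, m, n, rfl⟩ := hx
      obtain ⟨k', l', m', n', rfl⟩ := hy
      convert hmem (k + k') (l + l') (m + m') (n + n') using 1
      ring
    | zero_left y hy => simp
    | zero_right x hx => simp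
    | add_left x y z _ _ _ h1 h2 => simpa only [add_mul] using add_mem h1 h2
    | add_right x y z _ _ _ h1 h2 => simpa only [mul_add] using add_mem h1 h2
    | smul_left r x y _ _ h => simpa only [smul_mul_assoc] using Submodule.smul_mem _ r h
    | smul_right r x y _ _ h => simpa only [mul_smul_comm] using Submodule.smul_mem _ r h)
  have h1 : z1 ∈ T := by
    rw [Submodule.mem_toSubalgebra]; simpa using hmem 1 0 0 0
  have h2 : z2 ∈ T := by
    rw [Submodule.mem_toSubalgebra]; simpa using hmem 0 1 0 0
  have h3 : z1s ∈ T := by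
    rw [Submodule.mem_toSubalgebra]; simpa using hmem 0 0 1 0
  have h4 : z2s ∈ T := by
    rw [Submodule.mem_toSubalgebra]; simpa using hmem 0 0 0 1
  obtain ⟨f, ⟨f1, f2, f3, f4⟩, -⟩ := huniv T ⟨z1, h1⟩ ⟨z2, h2⟩ ⟨z1s, h3⟩ ⟨z2s, h4⟩
    (Subtype.ext hrel)
  have hid : T.val.comp f = AlgHom.id ℂ A :=
    (huniv A z1 z2 z1s z2s hrel).unique (by simp [f1, f2, f3, f4]) (by simp)
  symm
  rw [eq_top_iff]
  intro a _
  have ha : (f a : A) = a := DFunLike.congr_fun hid a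
  rw [← ha]
  exact (f a).2

omit [GradedAlgebra 𝒜] in
/-- A monomial with as many factors `zⱼ` as factors `zᵢ*` is a product of elements `zᵢ* zⱼ`. -/
lemma monomial_mem_adjoin (N : ℕ) : ∀ k l m n : ℕ, k + l = N → m + n = N →
    z1 ^ k * z2 ^ l * (z1s ^ m * z2s ^ n) ∈
      Algebra.adjoin ℂ {z1s * z1, z1s * z2, z2s * z1, z2s * z2} := by
  induction N with
  | zero =>
    intro k l m n h1 h2
    obtain ⟨rfl, rfl⟩ : k = 0 ∧ l = 0 := by omega
    obtain ⟨rfl, rfl⟩ : m = 0 ∧ n = 0 := by omega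
    simp
  | succ N ih =>
    intro k l m n h1 h2
    have step : ∀ g ∈ ({z1s * z1, z1s * z2, z2s * z1, z2s * z2} : Set A),
        ∀ k l m n : ℕ, k + l = N → m + n = N →
        z1 ^ k * z2 ^ l * (z1s ^ m * z2s ^ n) * g ∈
          Algebra.adjoin ℂ {z1s * z1, z1s * z2, z2s * z1, z2s * z2} :=
      fun g hg k l m n h1 h2 => mul_mem (ih k l m n h1 h2) (Algebra.subset_adjoin hg)
    rcases k with _ | k
    · obtain rfl : l = N + 1 := by omega
      rcases m with _ | m
      · obtain rfl : n = N + 1 := by omega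
        convert step (z2s * z2) (by simp) 0 N 0 N (by omega) (by omega) using 1
        ring
      · convert step (z1s * z2) (by simp) 0 N m n (by omega) (by omega) using 1
        ring
    · rcases m with _ | m
      · obtain rfl : n = N + 1 := by omega
        convert step (z2s * z1) (by simp) k l 0 N (by omega) (by omega) using 1
        ring
      · convert step (z1s * z1) (by simp) k l m n (by omega) (by omega) using 1
        ring

include hBsub hz1 hz2 hz1s hz2s hrel huniv in
/-- The base algebra `B` is generated by the entries `zᵢ* zⱼ` of the Hopf projection. -/
lemma Bsub_le_adjoin :
    Bsub ≤ Algebra.adjoin ℂ {z1s * z1, z1s * z2, z2s * z1, z2s * z2} := by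
  intro b hb
  have hproj : ∀ a : A, proj 𝒜 a ∈
      Algebra.adjoin ℂ {z1s * z1, z1s * z2, z2s * z1, z2s * z2} := by
    intro a
    have ha : a ∈ (⊤ : Submodule ℂ A) := trivial
    rw [span_monomials hrel huniv] at ha
    induction ha using Submodule.span_induction with
    | zero => simp
    | add x y _ _ hx hy => rw [map_add]; exact add_mem hx hy
    | smul r x _ hx => rw [map_smul]; exact Subalgebra.smul_mem _ hx r
    | mem x hx =>
      obtain ⟨k, l, m, n, rfl⟩ := hx
      rw [proj_of_mem 𝒜 (SetLike.GradedMul.mul_mem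
        (SetLike.GradedMul.mul_mem (SetLike.pow_mem_graded k hz1) (SetLike.pow_mem_graded l hz2))
        (SetLike.GradedMul.mul_mem (SetLike.pow_mem_graded m hz1s)
          (SetLike.pow_mem_graded n hz2s)))]
      split_ifs with h
      · simp at h
        exact monomial_mem_adjoin (k + l) k l m n rfl (by omega)
      · exact zero_mem _
  rw [← show proj 𝒜 b = b from proj_coe hBsub ⟨b, hb⟩]
  exact hproj b

omit [GradedAlgebra 𝒜] in
include hrel huniv in
/-- A derivation of `A` may be prescribed on the generators, subject to the derivative of the
sphere relation. It is the second component of an algebra map to the square-zero extension. -/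
lemma exists_derivation {M : Type} [AddCommGroup M] [Module A M] [Module ℂ M]
    [IsScalarTower ℂ A M] (m1 m2 m1s m2s : M)
    (h : (z1s • m1 + z1 • m1s) + (z2s • m2 + z2 • m2s) = 0) :
    ∃ D : Derivation ℂ A M, D z1 = m1 ∧ D z2 = m2 ∧ D z1s = m1s ∧ D z2s = m2s := by
  let : Module Aᵐᵒᵖ M := Module.compHom M ((RingHom.id A).fromOpposite mul_comm)
  have : IsCentralScalar A M := ⟨fun _ _ => rfl⟩
  obtain ⟨f, ⟨f1, f2, f3, f4⟩, -⟩ := huniv (TrivSqZeroExt A M)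
    (TrivSqZeroExt.inl z1 + TrivSqZeroExt.inr m1) (TrivSqZeroExt.inl z2 + TrivSqZeroExt.inr m2)
    (TrivSqZeroExt.inl z1s + TrivSqZeroExt.inr m1s) (TrivSqZeroExt.inl z2s + TrivSqZeroExt.inr m2s)
    (by
      apply TrivSqZeroExt.ext
      · simpa using hrel
      · simpa using h)
  have hid : (TrivSqZeroExt.fstHom ℂ A M).comp f = AlgHom.id ℂ A :=
    (huniv A z1 z2 z1s z2s hrel).unique (by simp [f1, f2, f3, f4]) (by simp)
  have hfst : ∀ a, (f a).fst = a := fun a => DFunLike.congr_fun hid a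
  refine ⟨Derivation.mk' ((TrivSqZeroExt.sndHom A M).restrictScalars ℂ ∘ₗ f.toLinearMap) ?_, ?_⟩
  · intro a b
    simp [hfst]
  · simp [f1, f2, f3, f4]

include hBsub hz1 hz2 hz1s hz2s hrel huniv in
/-- The Grassmann connection: `d : B → Ω¹_B` extends to a derivation of `A` with values in
`A ⊗_B Ω¹_B`. With `P = (zᵢ* zⱼ)`, so that `P² = P`, it is given by
`Dzⱼ = ∑ₖ zₖ dPₖⱼ` and `Dzᵢ* = ∑ₖ zₖ* dPᵢₖ`. -/
lemma exists_connection :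
    ∃ D : Derivation ℂ A (A ⊗[Bsub] KaehlerDifferential ℂ Bsub),
      ∀ b : Bsub, D (b : A) = (1 : A) ⊗ₜ[Bsub] KaehlerDifferential.D ℂ Bsub b := by
  have hP : ∀ {p q : ℤ × ℤ} {x y : A}, x ∈ 𝒜 p → y ∈ 𝒜 q → (p + q).1 + (p + q).2 = 0 →
      x * y ∈ Bsub := fun hx hy h =>
    mem_Bsub_of_mem hBsub h (SetLike.GradedMul.mul_mem hx hy)
  let z : Fin 2 → A := ![z1, z2]
  let zs : Fin 2 → A := ![z1s, z2s]
  have hrel' : zs 0 * z 0 + zs 1 * z 1 = 1 := hrel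
  have hmem : ∀ i j, zs i * z j ∈ Bsub := by
    intro i j
    fin_cases i <;> fin_cases j
    · exact hP hz1s hz1 (by simp)
    · exact hP hz1s hz2 (by simp)
    · exact hP hz2s hz1 (by simp)
    · exact hP hz2s hz2 (by simp)
  let P : Fin 2 → Fin 2 → Bsub := fun i j => ⟨zs i * z j, hmem i j⟩
  let δ : Derivation ℂ Bsub (A ⊗[Bsub] KaehlerDifferential ℂ Bsub) :=
    (TensorProduct.mk Bsub A (KaehlerDifferential ℂ Bsub) 1).compDer (KaehlerDifferential.D ℂ Bsub)
  have hδ : ∀ b, δ b = (1 : A) ⊗ₜ[Bsub] KaehlerDifferential.D ℂ Bsub b := fun b => rfl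
  have hδmul : ∀ b b', δ (b * b') = (b : A) • δ b' + (b' : A) • δ b := fun b b' => by
    rw [δ.leibniz]; rfl
  have hPP : ∀ i j, P i j = P i 0 * P 0 j + P i 1 * P 1 j := by
    intro i j
    apply Subtype.ext
    change zs i * z j = zs i * z 0 * (zs 0 * z j) + zs i * z 1 * (zs 1 * z j)
    linear_combination (- (zs i * z j)) * hrel'
  -- the Leibniz rule for `Pᵢⱼ = zᵢ* zⱼ` follows from `dP = P dP + dP P`
  have hdP : ∀ i j, zs i • (z 0 • δ (P 0 j) + z 1 • δ (P 1 j)) +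
      z j • (zs 0 • δ (P i 0) + zs 1 • δ (P i 1)) = δ (P i j) := by
    intro i j
    conv_rhs => rw [hPP i j, map_add, hδmul, hδmul]
    simp only [P, smul_add, smul_smul, mul_comm (z j)]
    abel
  have htr : δ (P 0 0) + δ (P 1 1) = 0 := by
    rw [← map_add, show P 0 0 + P 1 1 = 1 from Subtype.ext hrel', Derivation.map_one_eq_zero]
  obtain ⟨D, h1, h2, h3, h4⟩ := exists_derivation hrel huniv
    (z 0 • δ (P 0 0) + z 1 • δ (P 1 0)) (z 0 • δ (P 0 1) + z 1 • δ (P 1 1))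
    (zs 0 • δ (P 0 0) + zs 1 • δ (P 0 1)) (zs 0 • δ (P 1 0) + zs 1 • δ (P 1 1))
    ((congrArg₂ (· + ·) (hdP 0 0) (hdP 1 1)).trans htr)
  refine ⟨D, fun b => ?_⟩
  have hDz : ∀ j, D (z j) = z 0 • δ (P 0 j) + z 1 • δ (P 1 j) := by
    intro j; fin_cases j
    · exact h1
    · exact h2
  have hDzs : ∀ i, D (zs i) = zs 0 • δ (P i 0) + zs 1 • δ (P i 1) := by
    intro j; fin_cases j
    · exact h3
    · exact h4
  have hDP : ∀ i j, D (zs i * z j) = δ (P i j) := by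
    intro i j
    rw [D.leibniz, hDz, hDzs, hdP]
  have hind : ∀ x ∈ Algebra.adjoin ℂ {z1s * z1, z1s * z2, z2s * z1, z2s * z2},
      ∃ hx : x ∈ Bsub, D x = δ ⟨x, hx⟩ := by
    intro x hx
    induction hx using Algebra.adjoin_induction with
    | mem x hx =>
      rcases hx with rfl | rfl | rfl | rfl
      · exact ⟨hmem 0 0, hDP 0 0⟩
      · exact ⟨hmem 0 1, hDP 0 1⟩
      · exact ⟨hmem 1 0, hDP 1 0⟩
      · exact ⟨hmem 1 1, hDP 1 1⟩
    | algebraMap r =>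
      refine ⟨Bsub.algebraMap_mem r, ?_⟩
      rw [D.map_algebraMap]
      exact (δ.map_algebraMap r).symm
    | add x y _ _ hx hy =>
      obtain ⟨hx, hx'⟩ := hx
      obtain ⟨hy, hy'⟩ := hy
      refine ⟨add_mem hx hy, ?_⟩
      rw [map_add, hx', hy', ← map_add]
      rfl
    | mul x y _ _ hx hy =>
      obtain ⟨hx, hx'⟩ := hx
      obtain ⟨hy, hy'⟩ := hy
      refine ⟨mul_mem hx hy, ?_⟩
      rw [D.leibniz, hx', hy']
      exact (hδmul ⟨x, hx⟩ ⟨y, hy⟩).symm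
  obtain ⟨_, h⟩ := hind b (Bsub_le_adjoin hBsub hz1 hz2 hz1s hz2s hrel huniv b.2)
  exact h

include hBsub hz1 hz2 hz1s hz2s hrel huniv in
/-- `Ω¹_B → Ω¹_A` is split: compose the map `Ω¹_A → A ⊗_B Ω¹_B` of the Grassmann connection with
the projection of `A` onto `B`. -/
lemma kaehler_map_injective :
    Function.Injective (KaehlerDifferential.map ℂ ℂ Bsub A) := by
  obtain ⟨D, hD⟩ := exists_connection hBsub hz1 hz2 hz1s hz2s hrel huniv
  obtain ⟨π, hπ⟩ := exists_retraction hBsub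
  let ρ : KaehlerDifferential ℂ A →ₗ[Bsub] KaehlerDifferential ℂ Bsub :=
    (TensorProduct.lid Bsub _).toLinearMap.comp
      ((TensorProduct.map π LinearMap.id).comp (D.liftKaehlerDifferential.restrictScalars Bsub))
  have h : ρ.comp (KaehlerDifferential.map ℂ ℂ Bsub A) = LinearMap.id := by
    apply Derivation.liftKaehlerDifferential_unique
    ext b
    have h1 : D.liftKaehlerDifferential (KaehlerDifferential.map ℂ ℂ Bsub A
        (KaehlerDifferential.D ℂ Bsub b)) =
        (1 : A) ⊗ₜ[Bsub] KaehlerDifferential.D ℂ Bsub b := by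
      rw [KaehlerDifferential.map_D, Derivation.liftKaehlerDifferential_comp_D]
      exact hD b
    change TensorProduct.lid Bsub _ (TensorProduct.map π LinearMap.id
      (D.liftKaehlerDifferential (KaehlerDifferential.map ℂ ℂ Bsub A
        (KaehlerDifferential.D ℂ Bsub b)))) = KaehlerDifferential.D ℂ Bsub b
    rw [h1, TensorProduct.map_tmul, hπ, TensorProduct.lid_tmul, one_smul, LinearMap.id_apply]
  exact Function.LeftInverse.injective (g := ρ) fun x => LinearMap.congr_fun h x

end Classical

end Helpers

/-- in `Ω¹(A_θ)` the left `A_θ`-submodule generated by `{d_θ b : b ∈ B}`,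
the right `A_θ`-submodule generated by the same set, and the `A_θ`-sub-bimodule
generated by it all coincide (the horizontal forms `Ω¹_hor(A_θ)`); moreover the
`B`-submodule `B d_θ B`, with the differential `b ↦ d_θ b`, is isomorphic as a
`B`-module with derivation to the Kähler differentials `Ω¹_{B/ℂ}` of `B ≅ O(S²)`. -/
theorem deformed_horizontal_forms
    (A : Type) [CommRing A] [Algebra ℂ A]
    (𝒜 : ℤ × ℤ → Submodule ℂ A) [GradedAlgebra 𝒜]
    (z1 z2 z1s z2s : A)
    (hz1 : z1 ∈ 𝒜 (1, 0)) (hz2 : z2 ∈ 𝒜 (0, 1))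
    (hz1s : z1s ∈ 𝒜 (-1, 0)) (hz2s : z2s ∈ 𝒜 (0, -1))
    (hrel : z1s * z1 + z2s * z2 = 1)
    (huniv : ∀ (C : Type) [CommRing C] [Algebra ℂ C] (w1 w2 w1s w2s : C),
      w1s * w1 + w2s * w2 = 1 →
      ∃! f : A →ₐ[ℂ] C, f z1 = w1 ∧ f z2 = w2 ∧ f z1s = w1s ∧ f z2s = w2s)
    (θ : ℝ)
    (stp : A →ₗ[ℂ] A →ₗ[ℂ] A)
    (hstp : ∀ (p q : ℤ × ℤ), ∀ a ∈ 𝒜 p, ∀ a' ∈ 𝒜 q, stp a a' = phase θ p q • (a * a'))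
    -- the braided product on `A ⊗ A`
    (bmul : A ⊗[ℂ] A →ₗ[ℂ] A ⊗[ℂ] A →ₗ[ℂ] A ⊗[ℂ] A)
    (hbmul : ∀ (p p' u u' : ℤ × ℤ), ∀ a ∈ 𝒜 p, ∀ a' ∈ 𝒜 p', ∀ c ∈ 𝒜 u, ∀ c' ∈ 𝒜 u',
      bmul (a ⊗ₜ[ℂ] a') (c ⊗ₜ[ℂ] c')
        = rphase θ u p' • ((stp a c) ⊗ₜ[ℂ] (stp a' c')))
    -- `B` as subalgebra of total-degree-`0` elements
    (Bsub : Subalgebra ℂ A) (hBsub : Bsub.toSubmodule = totalDeg 𝒜 0) :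
    -- notation: `Kθ = Γ¹(A_θ)`, `K2θ = (Γ¹(A_θ))²`, so `Ω¹(A_θ)` is the image of `Kθ`
    -- in `(A ⊗ A) ⧸ K2θ`
    ∀ (Kθ K2θ : Submodule ℂ (A ⊗[ℂ] A)),
      Kθ = LinearMap.ker (TensorProduct.lift stp) →
      K2θ = Submodule.span ℂ {y : A ⊗[ℂ] A | ∃ x ∈ Kθ, ∃ x' ∈ Kθ, y = bmul x x'} →
      -- the left `A_θ`-submodule generated by the `d_θ b` coincides with the right one
      (Submodule.span ℂ {y : (A ⊗[ℂ] A) ⧸ K2θ | ∃ (a : A), ∃ b ∈ totalDeg 𝒜 0,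
          y = K2θ.mkQ (TensorProduct.map (stp a) LinearMap.id
            ((1 : A) ⊗ₜ[ℂ] b - b ⊗ₜ[ℂ] (1 : A)))}
        = Submodule.span ℂ {y : (A ⊗[ℂ] A) ⧸ K2θ | ∃ (a : A), ∃ b ∈ totalDeg 𝒜 0,
          y = K2θ.mkQ (TensorProduct.map LinearMap.id (stp.flip a)
            ((1 : A) ⊗ₜ[ℂ] b - b ⊗ₜ[ℂ] (1 : A)))}) ∧
      -- and with the `A_θ`-sub-bimodule generated by the `d_θ b`
      (Submodule.span ℂ {y : (A ⊗[ℂ] A) ⧸ K2θ | ∃ (a : A), ∃ b ∈ totalDeg 𝒜 0,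
          y = K2θ.mkQ (TensorProduct.map (stp a) LinearMap.id
            ((1 : A) ⊗ₜ[ℂ] b - b ⊗ₜ[ℂ] (1 : A)))}
        = Submodule.span ℂ {y : (A ⊗[ℂ] A) ⧸ K2θ | ∃ (a a' : A), ∃ b ∈ totalDeg 𝒜 0,
          y = K2θ.mkQ (TensorProduct.map (stp a) (stp.flip a')
            ((1 : A) ⊗ₜ[ℂ] b - b ⊗ₜ[ℂ] (1 : A)))}) ∧
      -- `B d_θ B` with `b ↦ d_θ b` is isomorphic, as a `B`-module with derivation,
      -- to the Kähler differentials `Ω¹_{B/ℂ}`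
      (∃ e : KaehlerDifferential ℂ ↥Bsub →ₗ[ℂ] ((A ⊗[ℂ] A) ⧸ K2θ),
        Function.Injective e ∧
        LinearMap.range e
          = Submodule.span ℂ {y : (A ⊗[ℂ] A) ⧸ K2θ | ∃ b ∈ totalDeg 𝒜 0,
              ∃ b' ∈ totalDeg 𝒜 0,
              y = K2θ.mkQ ((stp b 1) ⊗ₜ[ℂ] b' - (stp b b') ⊗ₜ[ℂ] (1 : A))} ∧
        (∀ b : ↥Bsub,
          e (KaehlerDifferential.D ℂ ↥Bsub b)
            = K2θ.mkQ ((1 : A) ⊗ₜ[ℂ] (b : A) - (b : A) ⊗ₜ[ℂ] (1 : A))) ∧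
        (∀ (lactθ : A → ((A ⊗[ℂ] A) ⧸ K2θ) →ₗ[ℂ] ((A ⊗[ℂ] A) ⧸ K2θ)),
          (∀ (a : A) (x : A ⊗[ℂ] A),
            lactθ a (K2θ.mkQ x) = K2θ.mkQ (TensorProduct.map (stp a) LinearMap.id x)) →
          ∀ (b : ↥Bsub) (w : KaehlerDifferential ℂ ↥Bsub),
            e (b • w) = lactθ (b : A) (e w))) := by
  intro Kθ K2θ hK hK2
  have hmem := mem_K2_iff hstp hbmul hK hK2
  refine ⟨?_, ?_, ?_⟩
  · rw [left_eq_classical hstp hmem, right_eq_classical hstp hmem]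
  · rw [left_eq_classical hstp hmem, bimodule_eq_classical hstp hmem]
  obtain ⟨ψ, hψinj, hψ⟩ := exists_kaehler_embedding hmem
  let ι : KaehlerDifferential ℂ Bsub →ₗ[Bsub] KaehlerDifferential ℂ A :=
    KaehlerDifferential.map ℂ ℂ Bsub A
  have hιinj : Function.Injective ι :=
    kaehler_map_injective hBsub hz1 hz2 hz1s hz2s hrel huniv
  let e : KaehlerDifferential ℂ Bsub →ₗ[ℂ] ((A ⊗[ℂ] A) ⧸ K2θ) := ψ ∘ₗ ι.restrictScalars ℂ
  have he : ∀ b b' : Bsub, e (b • KaehlerDifferential.D ℂ Bsub b') =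
      K2θ.mkQ ((b : A) ⊗ₜ[ℂ] (b' : A) - ((b : A) * b') ⊗ₜ[ℂ] (1 : A)) := by
    intro b b'
    have h1 : ι (b • KaehlerDifferential.D ℂ Bsub b') =
        (b : A) • KaehlerDifferential.D ℂ A (b' : A) := by
      rw [map_smul, show ι (KaehlerDifferential.D ℂ Bsub b') = KaehlerDifferential.D ℂ A (b' : A)
        from KaehlerDifferential.map_D ℂ ℂ Bsub A b']
      rfl
    change ψ (ι _) = _
    rw [h1, hψ, twist_dform_Bsub hBsub, dform_apply]
  have hspan : ∀ w : KaehlerDifferential ℂ Bsub, w ∈ Submodule.span ℂ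
      {w | ∃ b b' : Bsub, w = b • KaehlerDifferential.D ℂ Bsub b'} := by
    intro w
    have hw : w ∈ Submodule.span Bsub (Set.range (KaehlerDifferential.D ℂ Bsub)) := by
      rw [KaehlerDifferential.span_range_derivation]; trivial
    induction hw using Submodule.span_induction with
    | zero => exact zero_mem _
    | add x y _ _ hx hy => exact add_mem hx hy
    | mem x hx =>
      obtain ⟨b, rfl⟩ := hx
      exact Submodule.subset_span ⟨1, b, (one_smul _ _).symm⟩
    | smul b x hx₀ hx =>
      clear hx₀
      induction hx using Submodule.span_induction with
      | zero => rw [smul_zero]; exact zero_mem _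
      | add x y _ _ hx hy => rw [smul_add]; exact add_mem hx hy
      | smul r x _ hx => rw [smul_comm]; exact Submodule.smul_mem _ r hx
      | mem x hx =>
        obtain ⟨c, c', rfl⟩ := hx
        exact Submodule.subset_span ⟨b * c, c', smul_smul _ _ _⟩
  have hB : ∀ x, x ∈ totalDeg 𝒜 0 ↔ x ∈ Bsub := fun x => by
    rw [← hBsub, Subalgebra.mem_toSubmodule]
  refine ⟨e, hψinj.comp hιinj, ?_, ?_, ?_⟩
  · apply le_antisymm
    · rintro _ ⟨w, rfl⟩
      induction hspan w using Submodule.span_induction with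
      | zero => rw [map_zero]; exact zero_mem _
      | add x y _ _ hx hy => rw [map_add]; exact add_mem hx hy
      | smul r x _ hx => rw [map_smul]; exact Submodule.smul_mem _ r hx
      | mem x hx =>
        obtain ⟨b, b', rfl⟩ := hx
        refine Submodule.subset_span ⟨b, mem_totalDeg hBsub b, b', mem_totalDeg hBsub b', ?_⟩
        rw [he, stp_one hstp, star_Bsub hBsub hstp]
    · rw [Submodule.span_le]
      rintro _ ⟨b, hb, b', hb', rfl⟩
      rw [hB] at hb hb'
      refine ⟨(⟨b, hb⟩ : Bsub) • KaehlerDifferential.D ℂ Bsub ⟨b', hb'⟩, ?_⟩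
      rw [he, stp_one hstp]
      rw [show stp b b' = b * b' from star_Bsub hBsub hstp ⟨b, hb⟩ ⟨b', hb'⟩]
  · intro b
    have h := he 1 b
    rw [one_smul] at h
    rw [h]
    simp
  · intro lactθ hlact b w
    induction hspan w using Submodule.span_induction with
    | zero => simp
    | add x y _ _ hx hy => rw [smul_add, map_add, hx, hy, map_add, map_add]
    | smul r x _ hx => rw [smul_comm, map_smul, hx, map_smul, map_smul]
    | mem x hx =>
      obtain ⟨c, c', rfl⟩ := hx
      have h := star_Bsub hBsub hstp b (c * c')
      push_cast at h
      rw [smul_smul, he, he, hlact, map_sub (TensorProduct.map _ _), TensorProduct.map_tmul, TensorProduct.map_tmul,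
        star_Bsub hBsub hstp, h]
      simp [mul_assoc]
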